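/- arXiv:1708.00624 — 2 statements merged into one kernel-verified Lean document; each statement's English description precedes it below -/
import Mathlib

section
/- Let C be a caterpillar whose spine has order s. Then C is k-antimagic for k = max(0, ⌊(s-1)/2⌋ - 1 - E(C)), where E(C) denotes the leaves excess of C. -/
/-!
Write the caterpillar as a longest path `e_0, e_1, ..., e_s` (its `s - 1` spine edges and one leaf
edge at either end) together with `L` further leaf edges, the legs, which are carried by `t` spine
vertices. Since the leaves excess is `L - t`, the number `M` of available labels satisfies both
`M ≥ s + 1 + L` and `M ≥ s + t + ⌊(s - 1) / 2⌋`.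

Along the path, edges of even index receive the smallest labels `1, 2, 3, ...` in order and edges of
odd index receive the largest labels `b, b + 1, ..., M` in order. The sums `P_i = e_i + e_{i+1}` are
then consecutive integers above `b`, while legs take labels below `b`; so a spine vertex of degree 2
never collides with a leg. For even `s` the last path edge has a small label as well. For odd `s` it
would have the label `M`, which may be the sum at a vertex of degree 2; it is given the label that
makes the last sum equal to `b` instead, which is possible if `t ≥ 1`; a path with `s` odd is labelled
`1, 2, ..., s + 1` in order. This is `exists_path_labels`.

At each of the `t` vertices carrying legs, all legs but one are labelled arbitrarily. The remaining
legs get labels from a set `T` just below `b`, in increasing order of the partial vertex sums, which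
makes these `t` vertex sums distinct (`exists_injOn_add_injOn`). The lower bound on `M` is exactly
what makes every element of `T` at least `s`, so that these sums exceed `M` and all the `P_i`
(`exists_leg_labels`).
-/

open Finset SimpleGraph
open scoped Classical

variable {V : Type*}

/-- The spine of a graph: the set of its non-leaf vertices (for a tree of order at
least 3, these are exactly the vertices of degree at least 2). -/
noncomputable def SimpleGraph.spine [Fintype V] (G : SimpleGraph V) : Set V :=
  {v | 2 ≤ G.degree v}

/-- The order of the spine, i.e., its number of vertices. -/
noncomputable def SimpleGraph.spineOrder [Fintype V] (G : SimpleGraph V) : ℕ :=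
  Nat.card G.spine

/-- A caterpillar is a tree of order at least 3 such that removing all of its leaves
produces a path (i.e., the subgraph induced on the non-leaf vertices is a path graph). -/
def SimpleGraph.IsCaterpillar [Fintype V] (G : SimpleGraph V) : Prop :=
  G.IsTree ∧ 3 ≤ Fintype.card V ∧
    Nonempty ((G.induce G.spine) ≃g pathGraph G.spineOrder)

/-- The vertex sum at `v` of an edge labeling `f`: the sum of the labels of the
edges incident to `v`. -/
noncomputable def SimpleGraph.vertexSum [Fintype V] (G : SimpleGraph V)
    (f : Sym2 V → ℕ) (v : V) : ℕ :=
  ∑ e ∈ G.incidenceFinset v, f e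

/-- A graph `G` is `k`-antimagic if there is an injection from its edge set to
`{1, 2, ..., |E(G)| + k}` such that all vertex sums are pairwise distinct. -/
def SimpleGraph.IsAntimagic [Fintype V] (G : SimpleGraph V) (k : ℕ) : Prop :=
  ∃ f : Sym2 V → ℕ,
    (∀ e ∈ G.edgeFinset, f e ∈ Finset.Icc 1 (G.edgeFinset.card + k)) ∧
    Set.InjOn f ↑G.edgeFinset ∧
    Function.Injective (G.vertexSum f)

/-- The leaves excess of a caterpillar: the sum over all vertices of degree at
least 4 of their degree minus 3. -/
noncomputable def SimpleGraph.leavesExcess [Fintype V] (G : SimpleGraph V) : ℕ :=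
  ∑ v ∈ Finset.univ.filter (fun v => 4 ≤ G.degree v), (G.degree v - 3)

/-! ### Assigning labels to the legs -/

/-- Given weights `W` on `D` and enough labels in `T`, distinct labels can be assigned so that all
sums weight plus label are distinct: give larger labels to larger weights. -/
theorem exists_injOn_add_injOn {ι : Type*} (W : ι → ℕ) (D : Finset ι) :
    ∀ T : Finset ℕ, D.card ≤ T.card →
      ∃ z : ι → ℕ, (∀ i ∈ D, z i ∈ T) ∧ Set.InjOn z D ∧ Set.InjOn (fun i => W i + z i) D := by
  induction D using Finset.induction_on_max_value W with
  | empty => intro T _; exact ⟨fun _ => 0, by simp⟩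
  | insert a D ha hmax ih =>
    intro T hT
    rw [Finset.card_insert_of_notMem ha] at hT
    have hne : T.Nonempty := Finset.card_pos.mp (by omega)
    have hτ := T.max'_mem hne
    obtain ⟨z, hz, hz1, hz2⟩ := ih (T.erase (T.max' hne))
      (by rw [Finset.card_erase_of_mem hτ]; omega)
    have hlt : ∀ i ∈ D, z i < T.max' hne := fun i hi => by
      have h := Finset.mem_erase.mp (hz i hi)
      exact lt_of_le_of_ne (T.le_max' _ h.2) h.1
    have hne' : ∀ i ∈ D, i ≠ a := fun i hi h => ha (h ▸ hi)
    refine ⟨Function.update z a (T.max' hne), ?_, ?_, ?_⟩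
    · intro i hi
      rcases Finset.mem_insert.mp hi with rfl | hi
      · simpa using hτ
      · rw [Function.update_of_ne (hne' i hi)]
        exact Finset.mem_of_mem_erase (hz i hi)
    · rw [Finset.coe_insert, Set.injOn_insert (by simpa using ha)]
      refine ⟨fun i hi j hj h => ?_, ?_⟩
      · rw [Function.update_of_ne (hne' i hi), Function.update_of_ne (hne' j hj)] at h
        exact hz1 hi hj h
      · rintro ⟨i, hi, h⟩
        rw [Function.update_of_ne (hne' i hi), Function.update_self] at h
        exact (hlt i hi).ne h
    · rw [Finset.coe_insert, Set.injOn_insert (by simpa using ha)]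
      refine ⟨fun i hi j hj h => ?_, ?_⟩
      · simp only [Function.update_of_ne (hne' i hi), Function.update_of_ne (hne' j hj)] at h
        exact hz2 hi hj h
      · rintro ⟨i, hi, h⟩
        simp only [Function.update_of_ne (hne' i hi), Function.update_self] at h
        have := hlt i hi
        have := hmax i hi
        omega

/-- Labelling of the legs `Λ`, where `p v` is the position of the leg `v` on the spine and `P i` is
the sum of the two path labels at position `i`. Labels are taken from `R`; the subset `T` consists
of labels so large that one of them lifts any position above `M` and above all the `P j`. -/
theorem exists_leg_labels {ι : Type*} [Nonempty ι] (Λ : Finset ι) (p : ι → ℕ) (s M : ℕ) (P : ℕ → ℕ)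
    (hP : Set.InjOn P (Set.Iio s)) (hp : ∀ v ∈ Λ, p v < s) (R T : Finset ℕ) (hTR : T ⊆ R)
    (hR : Λ.card ≤ R.card) (hT : (Λ.image p).card ≤ T.card)
    (hPT : ∀ i < s, ∀ j < s, ∀ τ ∈ T, P j < P i + τ) (hM : ∀ i < s, ∀ τ ∈ T, M < P i + τ) :
    ∃ z : ι → ℕ, (∀ v ∈ Λ, z v ∈ R) ∧ Set.InjOn z Λ ∧
      Set.InjOn (fun i => P i + ∑ v ∈ Λ with p v = i, z v) (Set.Iio s) ∧
      ∀ i < s, P i + ∑ v ∈ Λ with p v = i, z v = P i ∨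
        M < P i + ∑ v ∈ Λ with p v = i, z v := by
  have hrep : ∀ i ∈ Λ.image p, ∃ v ∈ Λ, p v = i := fun i h => Finset.mem_image.mp h
  -- `ρ i` is the distinguished leg at position `i`, labelled from `T`.
  choose! ρ hρΛ hρp using hrep
  set J := Λ.image p with hJ
  have hρinj : Set.InjOn ρ J := fun i hi j hj h => by rw [← hρp i hi, ← hρp j hj, h]
  set D := J.image ρ with hD
  have hDΛ : D ⊆ Λ := fun v hv => by
    obtain ⟨i, hi, rfl⟩ := Finset.mem_image.mp hv
    exact hρΛ i hi
  have hDJ : D.card = J.card := Finset.card_image_of_injOn hρinj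
  obtain ⟨T', hT'T, hT'c⟩ := Finset.exists_subset_card_eq hT
  have hT'R := hT'T.trans hTR
  have hc1 := Finset.card_sdiff_of_subset hDΛ
  have hc2 := Finset.card_sdiff_of_subset hT'R
  obtain ⟨x, hxR, hxinj, -⟩ := exists_injOn_add_injOn (fun _ : ι => 0) (Λ \ D) (R \ T') (by omega)
  obtain ⟨y, hyT, hyinj, hysum⟩ := exists_injOn_add_injOn
    (fun i => P i + ∑ v ∈ (Λ \ D) with p v = i, x v) J T' hT'c.ge
  have hpJ : ∀ v ∈ Λ, p v ∈ J := fun v hv => Finset.mem_image_of_mem p hv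
  have hDρ : ∀ v ∈ D, ρ (p v) = v := fun v hv => by
    obtain ⟨i, hi, rfl⟩ := Finset.mem_image.mp hv
    rw [hρp i hi]
  have hsum : ∀ i ∈ J, P i + ∑ v ∈ Λ with p v = i, (if v ∈ D then y (p v) else x v) =
      P i + ∑ v ∈ (Λ \ D) with p v = i, x v + y i := by
    intro i hi
    have hset : (Λ.filter (p · = i)) = insert (ρ i) ((Λ \ D).filter (p · = i)) := by
      ext v
      simp only [Finset.mem_filter, Finset.mem_insert, Finset.mem_sdiff]
      constructor
      · rintro ⟨hv, rfl⟩
        by_cases hvD : v ∈ D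
        · exact Or.inl (hDρ v hvD).symm
        · exact Or.inr ⟨⟨hv, hvD⟩, rfl⟩
      · rintro (rfl | ⟨⟨hv, -⟩, h⟩)
        · exact ⟨hρΛ i hi, hρp i hi⟩
        · exact ⟨hv, h⟩
    have hρD : ρ i ∈ D := Finset.mem_image_of_mem ρ hi
    rw [hset, Finset.sum_insert (by simp [hρD]), if_pos hρD, hρp i hi,
      Finset.sum_congr rfl fun v hv => if_neg (Finset.mem_sdiff.mp (Finset.mem_filter.mp hv).1).2]
    ring
  have hsum0 : ∀ i ∉ J, P i + ∑ v ∈ Λ with p v = i, (if v ∈ D then y (p v) else x v) = P i := by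
    intro i hi
    have hem : Λ.filter (p · = i) = ∅ :=
      Finset.filter_false_of_mem fun v hv h => hi (h ▸ hpJ v hv)
    rw [hem, Finset.sum_empty, add_zero]
  have hJs : ∀ i ∈ J, i < s := fun i hi => by
    obtain ⟨v, hv, rfl⟩ := Finset.mem_image.mp hi
    exact hp v hv
  refine ⟨fun v => if v ∈ D then y (p v) else x v, ?_, ?_, ?_, ?_⟩
  · intro v hv
    dsimp only
    split_ifs with h
    · exact hT'R (hyT _ (hpJ v hv))
    · exact Finset.sdiff_subset (hxR v (Finset.mem_sdiff.mpr ⟨hv, h⟩))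
  · intro u hu v hv huv
    have key : ∀ u ∈ Λ, ∀ v ∈ Λ, u ∈ D → v ∉ D → y (p u) ≠ x v := fun u hu v hv _ hvD h =>
      (Finset.mem_sdiff.mp (hxR v (Finset.mem_sdiff.mpr ⟨hv, hvD⟩))).2 (h ▸ hyT _ (hpJ u hu))
    dsimp only at huv
    split_ifs at huv with h1 h2 h2
    · rw [← hDρ u h1, ← hDρ v h2, hyinj (hpJ u hu) (hpJ v hv) huv]
    · exact absurd huv (key u hu v hv h1 h2)
    · exact absurd huv.symm (key v hv u hu h2 h1)
    · exact hxinj (by simp [h1, Finset.mem_coe.mp hu]) (by simp [h2, Finset.mem_coe.mp hv]) huv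
  · intro i hi j hj hij
    have key : ∀ i < s, ∀ j ∈ J, P i < P j + ∑ v ∈ (Λ \ D) with p v = j, x v + y j :=
      fun i hi j hj => by
        have := hPT j (hJs j hj) i hi (y j) (hT'T (hyT j hj))
        omega
    dsimp only at hij
    by_cases hiJ : i ∈ J <;> by_cases hjJ : j ∈ J
    · rw [hsum i hiJ, hsum j hjJ] at hij
      exact hysum hiJ hjJ hij
    · rw [hsum i hiJ, hsum0 j hjJ] at hij
      exact absurd hij.symm (key j hj i hiJ).ne
    · rw [hsum0 i hiJ, hsum j hjJ] at hij
      exact absurd hij (key i hi j hjJ).ne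
    · rw [hsum0 i hiJ, hsum0 j hjJ] at hij
      exact hP hi hj hij
  · intro i hi
    by_cases hiJ : i ∈ J
    · right
      rw [hsum i hiJ]
      have := hM i hi (y i) (hT'T (hyT i hiJ))
      omega
    · exact Or.inl (hsum0 i hiJ)

/-! ### Labels of a longest path -/

/-- Labels `q 0, ..., q s` of a longest path, a disjoint set `R` of labels reserved for `L` legs, and
a set `T ⊆ R` of large leg labels for the `t` positions that carry legs. -/
theorem exists_path_labels (s t L M : ℕ) (hs : 1 ≤ s) (htL : t ≤ L) (hL : t = 0 → L = 0)
    (hM1 : s + 1 + L ≤ M) (hM2 : s + t + (s - 1) / 2 ≤ M) :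
    ∃ (q : ℕ → ℕ) (R T : Finset ℕ), T ⊆ R ∧ L ≤ R.card ∧ t ≤ T.card ∧
      (∀ r ∈ R, 1 ≤ r ∧ r ≤ M) ∧ (∀ i ≤ s, 1 ≤ q i ∧ q i ≤ M ∧ q i ∉ R) ∧
      Set.InjOn q (Set.Iic s) ∧ Set.InjOn (fun i => q i + q (i + 1)) (Set.Iio s) ∧
      (∀ i < s, q i + q (i + 1) ∉ R ∧ q i + q (i + 1) ≠ q 0 ∧ q i + q (i + 1) ≠ q s) ∧
      (∀ i < s, ∀ j < s, ∀ τ ∈ T, q j + q (j + 1) < q i + q (i + 1) + τ) ∧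
      ∀ i < s, ∀ τ ∈ T, M < q i + q (i + 1) + τ := by
  obtain ⟨n, rfl | rfl⟩ := Nat.even_or_odd' s
  · -- `b = M + 1 - n` is the smallest of the `n` large path labels.
    have hq : ∀ q : ℕ → ℕ, q = (fun i => if i % 2 = 0 then i / 2 + 1 else M + 1 - n + i / 2) →
        (∀ i < 2 * n, q i + q (i + 1) = M + 2 - n + i) := by
      rintro q rfl i hi
      dsimp only
      split_ifs <;> omega
    refine ⟨fun i => if i % 2 = 0 then i / 2 + 1 else M + 1 - n + i / 2,
      Finset.Icc (n + 2) (M - n), Finset.Icc (M + 1 - n - t) (M - n), ?_⟩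
    generalize hqd : (fun i => if i % 2 = 0 then i / 2 + 1 else M + 1 - n + i / 2) = q
    have hq' := hq q hqd.symm
    have hq'' : ∀ i ≤ 2 * n, i % 2 = 0 ∧ q i = i / 2 + 1 ∨
        i % 2 = 1 ∧ q i = M + 1 - n + i / 2 := by
      rintro i -
      subst hqd
      dsimp only
      split_ifs <;> omega
    have h0 := hq'' 0 (by omega)
    have hss := hq'' (2 * n) le_rfl
    simp only [Nat.card_Icc, Finset.mem_Icc]
    refine ⟨Finset.Icc_subset_Icc (by omega) le_rfl, by omega, by omega, by intros; omega, ?_,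
      ?_, ?_, ?_, ?_, ?_⟩
    · intro i hi
      have := hq'' i hi
      omega
    · intro i hi j hj hij
      have := hq'' i hi
      have := hq'' j hj
      simp only [Set.mem_Iic] at hi hj
      omega
    · intro i hi j hj hij
      have := hq' i hi
      have := hq' j hj
      simp only at hij
      omega
    · intro i hi
      have := hq' i hi
      omega
    · intro i hi j hj τ hτ
      have := hq' i hi
      have := hq' j hj
      omega
    · intro i hi τ hτ
      have := hq' i hi
      omega
  · by_cases ht : t = 0
    · -- Without legs, the sums `2 i + 3` are odd and exceed the label `1` of one end, and the
      -- label `s + 1` of the other end is even.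
      refine ⟨fun i => i + 1, ∅, ∅, ?_⟩
      simp only [Finset.notMem_empty, Finset.card_empty]
      refine ⟨by simp, by omega, by omega, by simp,
        fun i hi => ⟨by omega, by omega, not_false⟩, ?_, ?_,
        fun i hi => ⟨not_false, by omega, by omega⟩, by simp, by simp⟩
      · intro i _ j _ h
        simpa using h
      · intro i _ j _ h
        simp only at h
        omega
    · -- With `b = M + 1 - n`, the exceptional label is `b - (n + 1)`, so that the sum at the last
      -- spine vertex is `b`.
      generalize hqd : (fun i => if i = 2 * n + 1 then M - n + 1 - (n + 1) else
        if i % 2 = 0 then i / 2 + 1 else M + 1 - n + i / 2) = q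
      have hq'' : ∀ i ≤ 2 * n + 1, i = 2 * n + 1 ∧ q i = M - n + 1 - (n + 1) ∨
          i < 2 * n + 1 ∧ i % 2 = 0 ∧ q i = i / 2 + 1 ∨
          i < 2 * n + 1 ∧ i % 2 = 1 ∧ q i = M + 1 - n + i / 2 := by
        intro i hi
        subst hqd
        dsimp only
        split_ifs <;> omega
      have hq' : ∀ i < 2 * n + 1, i = 2 * n ∧ q i + q (i + 1) = M + 1 - n ∨
          i < 2 * n ∧ q i + q (i + 1) = M + 2 - n + i := by
        intro i hi
        have := hq'' i hi.le
        have := hq'' (i + 1) hi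
        omega
      have h0 := hq'' 0 (by omega)
      have hss := hq'' (2 * n + 1) le_rfl
      refine ⟨q, (Finset.Icc (n + 2) (M - n)).erase (q (2 * n + 1)),
        (Finset.Icc (M - n - t) (M - n)).erase (q (2 * n + 1)), ?_⟩
      have hc1 := Finset.pred_card_le_card_erase (s := Finset.Icc (n + 2) (M - n))
        (a := q (2 * n + 1))
      have hc2 := Finset.pred_card_le_card_erase (s := Finset.Icc (M - n - t) (M - n))
        (a := q (2 * n + 1))
      simp only [Nat.card_Icc] at hc1 hc2
      simp only [Finset.mem_Icc, Finset.mem_erase]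
      refine ⟨Finset.erase_subset_erase _ (Finset.Icc_subset_Icc (by omega) le_rfl), by omega,
        by omega, by intros; omega, ?_, ?_, ?_, ?_, ?_, ?_⟩
      · intro i hi
        have := hq'' i hi
        omega
      · intro i hi j hj hij
        have := hq'' i hi
        have := hq'' j hj
        simp only [Set.mem_Iic] at hi hj
        omega
      · intro i hi j hj hij
        have := hq' i hi
        have := hq' j hj
        simp only at hij
        omega
      · intro i hi
        have := hq' i hi
        omega
      · intro i hi j hj τ hτ
        have := hq' i hi
        have := hq' j hj
        omega
      · intro i hi τ hτ
        have := hq' i hi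
        omega

/-! ### Coordinates on a caterpillar -/

theorem vertexSum_eq_sum_neighborFinset [Fintype V] (G : SimpleGraph V) (f : Sym2 V → ℕ) (v : V) :
    G.vertexSum f v = ∑ u ∈ G.neighborFinset v, f s(v, u) := by
  unfold SimpleGraph.vertexSum
  refine (Finset.sum_bij (fun u _ => s(v, u)) ?_ ?_ ?_ ?_).symm
  · intro u hu
    simpa [SimpleGraph.mem_incidenceFinset, SimpleGraph.mk'_mem_incidenceSet_left_iff] using hu
  · intro a _ b _ h
    exact Sym2.congr_right.mp h
  · intro e he
    induction e with | _ a b =>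
    rw [SimpleGraph.mem_incidenceFinset, SimpleGraph.mk'_mem_incidenceSet_iff] at he
    obtain ⟨hab, rfl | rfl⟩ := he
    · exact ⟨b, by simpa using hab, rfl⟩
    · exact ⟨a, by simpa using hab.symm, Sym2.eq_swap⟩
  · intros; rfl

/-- `w` enumerates the spine in order, and `p v` is the position of the spine vertex to which
the leaf `v` is attached. -/
structure SpineCoords [Fintype V] (G : SimpleGraph V) (s : ℕ) (w : ℕ → V) (p : V → ℕ) : Prop where
  pos : 1 ≤ s
  two_le : ∀ i < s, 2 ≤ G.degree (w i)
  surj : ∀ v, 2 ≤ G.degree v → ∃ i < s, w i = v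
  inj : Set.InjOn w (Set.Iio s)
  adj : ∀ i < s, ∀ j < s, (G.Adj (w i) (w j) ↔ i + 1 = j ∨ j + 1 = i)
  lt : ∀ v, G.degree v < 2 → p v < s
  leaf : ∀ v, G.degree v < 2 → ∀ u, G.Adj v u ↔ u = w (p v)

theorem exists_spineCoords [Fintype V] (G : SimpleGraph V) (hC : G.IsCaterpillar) :
    ∃ w p, SpineCoords G G.spineOrder w p := by
  obtain ⟨hT, hcard, ⟨φ⟩⟩ := hC
  have hnt : Nontrivial V := Fintype.one_lt_card_iff_nontrivial.mp (by omega)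
  have hdeg : ∀ v, 0 < G.degree v := fun v => hT.connected.preconnected.degree_pos_of_nontrivial v
  have hnb : ∀ v, ∃ u, G.degree v < 2 → 2 ≤ G.degree u ∧ ∀ x, G.Adj v x ↔ x = u := by
    intro v
    by_cases hv : G.degree v < 2
    · have hv1 : G.degree v = 1 := by have := hdeg v; omega
      obtain ⟨u, hvu, hu⟩ := SimpleGraph.degree_eq_one_iff_existsUnique_adj.mp hv1
      refine ⟨u, fun _ => ⟨?_, fun x => ⟨hu x, fun h => h ▸ hvu⟩⟩⟩
      -- Two adjacent leaves would form a whole component, which is too small.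
      by_contra hlt
      have hu1 : G.degree u = 1 := by have := hdeg u; omega
      obtain ⟨v', -, hv'⟩ := SimpleGraph.degree_eq_one_iff_existsUnique_adj.mp hu1
      have hv'v : v = v' := hv' v hvu.symm
      obtain ⟨x, hx⟩ : ∃ x, x ∉ ({v, u} : Finset V) := by
        by_contra! hall
        have h1 : Fintype.card V ≤ ({v, u} : Finset V).card :=
          Finset.card_le_card fun x _ => hall x
        have h2 := Finset.card_le_two (a := v) (b := u)
        omega
      obtain ⟨W⟩ := hT.connected.preconnected v x
      obtain ⟨d, -, hd1, hd2⟩ := W.exists_boundary_dart {v, u} (by simp) (by simpa using hx)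
      have hd := d.adj
      simp only [Set.mem_insert_iff, Set.mem_singleton_iff] at hd1 hd2
      rcases hd1 with h | h <;> rw [h] at hd
      · exact hd2 (Or.inr (hu _ hd))
      · exact hd2 (Or.inl ((hv' _ hd).trans hv'v.symm))
    · exact ⟨v, fun h => absurd h hv⟩
  choose nb hnb2 hnb using hnb
  generalize G.spineOrder = s at φ
  let v0 : V := hnt.to_nonempty.some
  let w : ℕ → V := fun i => if h : i < s then (φ.symm ⟨i, h⟩).1 else v0
  have hw : ∀ i (h : i < s), w i = (φ.symm ⟨i, h⟩).1 := fun i h => dif_pos h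
  have hsurj : ∀ v, 2 ≤ G.degree v → ∃ i < s, w i = v := by
    intro v hv
    refine ⟨φ ⟨v, hv⟩, (φ ⟨v, hv⟩).2, ?_⟩
    rw [hw _ (φ ⟨v, hv⟩).2]
    simp
  choose! idx hidx hwidx using hsurj
  refine ⟨w, fun v => idx (nb v), ?_, ?_, fun v hv => ⟨idx v, hidx v hv, hwidx v hv⟩, ?_, ?_, ?_, ?_⟩
  · by_cases h : G.degree v0 < 2
    · have := hidx _ (hnb2 v0 h); omega
    · have := hidx v0 (by omega); omega
  · intro i hi
    rw [hw i hi]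
    exact (φ.symm ⟨i, hi⟩).2
  · intro i hi j hj h
    rw [hw i hi, hw j hj] at h
    exact congrArg Fin.val (φ.symm.injective (Subtype.ext h))
  · intro i hi j hj
    rw [hw i hi, hw j hj]
    have := φ.symm.map_adj_iff (v := ⟨i, hi⟩) (w := ⟨j, hj⟩)
    rw [SimpleGraph.pathGraph_adj] at this
    exact this
  · exact fun v hv => hidx _ (hnb2 v hv)
  · intro v hv u
    rw [hwidx _ (hnb2 v hv)]
    exact hnb v hv u

namespace SpineCoords

variable [Fintype V] {G : SimpleGraph V} {s : ℕ} {w : ℕ → V} {p : V → ℕ}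

/-- The neighbours of a spine vertex are its predecessor and successor on the spine, if any, and the
leaves attached to it. -/
theorem sum_neighborFinset (C : SpineCoords G s w p) (F : V → ℕ) {i : ℕ} (hi : i < s) :
    ∑ u ∈ G.neighborFinset (w i), F u =
      (if 0 < i then F (w (i - 1)) else 0) + (if i + 1 < s then F (w (i + 1)) else 0) +
        ∑ v ∈ {v | G.degree v < 2} with p v = i, F v := by
  have hleaf : ∀ v, G.degree v < 2 → (G.Adj (w i) v ↔ p v = i) := fun v hv => by
    rw [G.adj_comm, C.leaf v hv]
    exact ⟨fun h => (C.inj hi (C.lt v hv) h).symm, fun h => by rw [h]⟩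
  have hset : G.neighborFinset (w i) =
      ((if 0 < i then {w (i - 1)} else ∅) ∪ (if i + 1 < s then {w (i + 1)} else ∅)) ∪
        ({v | G.degree v < 2 ∧ p v = i} : Finset V) := by
    ext u
    simp only [SimpleGraph.mem_neighborFinset, Finset.mem_union, Finset.mem_filter,
      Finset.mem_univ, true_and]
    by_cases hu : G.degree u < 2
    · have hne : ∀ j < s, u ≠ w j := fun j hj h => by
        have := C.two_le j hj
        rw [← h] at this
        omega
      rw [hleaf u hu]
      refine ⟨fun h => Or.inr ⟨hu, h⟩, ?_⟩
      rintro ((h | h) | h)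
      · split_ifs at h
        · exact absurd (by simpa using h) (hne (i - 1) (by omega))
        · simp at h
      · split_ifs at h with h1
        · exact absurd (by simpa using h) (hne (i + 1) h1)
        · simp at h
      · exact h.2
    · obtain ⟨j, hj, rfl⟩ := C.surj u (by omega)
      have hinj : ∀ k < s, (w j = w k ↔ j = k) := fun k hk =>
        ⟨fun h => C.inj hj hk h, fun h => by rw [h]⟩
      rw [C.adj i hi j hj]
      simp only [hu, false_and, or_false]
      have hl : 0 < i → (w j = w (i - 1) ↔ j = i - 1) := fun _ => hinj _ (by omega)
      have hr : i + 1 < s → (w j = w (i + 1) ↔ j = i + 1) := fun h => hinj _ h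
      split_ifs with h1 h2 h2 <;> simp only [Finset.mem_singleton, Finset.notMem_empty] <;>
        grind
  have hdisj : Disjoint (if 0 < i then ({w (i - 1)} : Finset V) else ∅)
      (if i + 1 < s then {w (i + 1)} else ∅) := by
    split_ifs with h1 h2 <;> simp
    intro h
    have := C.inj (show i - 1 < s by omega) h2 h
    omega
  have hdisj' : Disjoint ((if 0 < i then ({w (i - 1)} : Finset V) else ∅) ∪
      (if i + 1 < s then {w (i + 1)} else ∅)) ({v | G.degree v < 2 ∧ p v = i} : Finset V) := by
    rw [Finset.disjoint_union_left]
    constructor <;> split_ifs with h1 <;>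
      simp only [Finset.disjoint_singleton_left, Finset.mem_filter, Finset.disjoint_empty_left]
    · have := C.two_le (i - 1) (by omega)
      omega
    · have := C.two_le (i + 1) (by omega)
      omega
  rw [hset, Finset.sum_union hdisj', Finset.sum_union hdisj, Finset.filter_filter]
  congr 2 <;> split_ifs <;> simp

theorem degree_eq (C : SpineCoords G s w p) {i : ℕ} (hi : i < s) :
    G.degree (w i) = (if 0 < i then 1 else 0) + (if i + 1 < s then 1 else 0) +
      (({v | G.degree v < 2} : Finset V).filter (p · = i)).card := by
  rw [← SimpleGraph.card_neighborFinset_eq_degree, Finset.card_eq_sum_ones,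
    C.sum_neighborFinset _ hi, Finset.card_eq_sum_ones]

/-- Leaves `α` and `β` that extend the spine to a longest path; when the spine is a single vertex
they are two leaves at that vertex. -/
theorem exists_end_leaves (C : SpineCoords G s w p) :
    ∃ α β, α ≠ β ∧ G.degree α < 2 ∧ G.degree β < 2 ∧ p α = 0 ∧ p β = s - 1 := by
  have hs := C.pos
  have h0 := C.degree_eq (show 0 < s by omega)
  have h1 := C.degree_eq (show s - 1 < s by omega)
  have h0' := C.two_le 0 (by omega)
  have h1' := C.two_le (s - 1) (by omega)
  rw [if_neg (by omega)] at h0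
  rw [if_neg (by omega : ¬ s - 1 + 1 < s)] at h1
  obtain ⟨α, hα⟩ : (({v | G.degree v < 2} : Finset V).filter (p · = 0)).Nonempty := by
    rw [← Finset.card_pos]
    split_ifs at h0 <;> omega
  simp only [Finset.mem_filter, Finset.mem_univ, true_and] at hα
  obtain ⟨β, hβ⟩ : ((({v | G.degree v < 2} : Finset V).filter (p · = s - 1)).erase α).Nonempty := by
    rw [← Finset.card_pos]
    by_cases h : s = 1
    · have := Finset.pred_card_le_card_erase
        (s := (({v | G.degree v < 2} : Finset V).filter (p · = s - 1))) (a := α)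
      rw [if_neg (by omega)] at h1
      omega
    · rw [Finset.erase_eq_of_notMem (by simp; omega)]
      split_ifs at h1 <;> omega
  simp only [Finset.mem_erase, Finset.mem_filter, Finset.mem_univ, true_and] at hβ
  exact ⟨α, β, hβ.1.symm, hα.1, hβ.2.1, hα.2, hβ.2.2⟩

theorem card_eq (C : SpineCoords G s w p) :
    Fintype.card V = s + ({v | G.degree v < 2} : Finset V).card := by
  have h : ({v | ¬ G.degree v < 2} : Finset V) = (Finset.range s).image w := by
    ext v
    simp only [Finset.mem_filter, Finset.mem_univ, true_and, Finset.mem_image, Finset.mem_range]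
    exact ⟨fun h => C.surj v (by omega), by rintro ⟨i, hi, rfl⟩; have := C.two_le i hi; omega⟩
  have h1 := Finset.card_filter_add_card_filter_not (s := (Finset.univ : Finset V))
    (fun v => G.degree v < 2)
  rw [h, Finset.card_image_of_injOn (by simpa [Set.Iio_def] using C.inj), Finset.card_range,
    Finset.card_univ] at h1
  omega

/-- Each position carrying legs contributes one to the image and, beyond its first leg, one to the
leaves excess for every further leg. -/
theorem leavesExcess_add_le (C : SpineCoords G s w p) (Λ : Finset V)
    (hdeg : ∀ i < s, G.degree (w i) = (Λ.filter (p · = i)).card + 2) (hp : ∀ v ∈ Λ, p v < s) :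
    G.leavesExcess + (Λ.image p).card ≤ Λ.card := by
  have hE : G.leavesExcess ≤ ∑ i ∈ Finset.range s, (G.degree (w i) - 3) := by
    rw [← Finset.sum_image (f := fun v => G.degree v - 3) (g := w)
      (by simpa [Set.Iio_def] using C.inj)]
    refine Finset.sum_le_sum_of_subset fun v hv => ?_
    obtain ⟨i, hi, rfl⟩ := C.surj v (by have := (Finset.mem_filter.mp hv).2; omega)
    exact Finset.mem_image_of_mem _ (Finset.mem_range.mpr hi)
  have hJ : (Λ.image p).card = ∑ i ∈ Finset.range s, if i ∈ Λ.image p then 1 else 0 := by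
    rw [← Finset.card_filter]
    congr 1
    ext i
    simp only [Finset.mem_filter, Finset.mem_range, iff_and_self]
    intro h
    obtain ⟨v, hv, rfl⟩ := Finset.mem_image.mp h
    exact hp v hv
  have hL : Λ.card = ∑ i ∈ Finset.range s, (Λ.filter (p · = i)).card :=
    Finset.card_eq_sum_card_fiberwise fun v hv => by simpa using hp v hv
  rw [hL, hJ]
  refine (Nat.add_le_add_right hE _).trans ?_
  rw [← Finset.sum_add_distrib]
  refine Finset.sum_le_sum fun i hi => ?_
  have := hdeg i (Finset.mem_range.mp hi)
  split_ifs with h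
  · have : 0 < (Λ.filter (p · = i)).card := by
      obtain ⟨v, hv, rfl⟩ := Finset.mem_image.mp h
      exact Finset.card_pos.mpr ⟨v, by simp [hv]⟩
    omega
  · omega

end SpineCoords

/-! ### The labelling of the caterpillar -/

/-- A caterpillar with a spine of order `s` is
`max(0, ⌊(s-1)/2⌋ - 1 - E(C))`-antimagic, where `E(C)` is its leaves excess. -/
theorem caterpillar_isAntimagic [Fintype V] (G : SimpleGraph V)
    (hC : G.IsCaterpillar) (s : ℕ) (hs : s = G.spineOrder) :
    G.IsAntimagic (max 0 ((s - 1) / 2 - 1 - G.leavesExcess)) := by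
  rw [Nat.zero_max]
  obtain ⟨w, p, C⟩ := exists_spineCoords G hC
  rw [← hs] at C
  have hspos := C.pos
  obtain ⟨α, β, hαβ, hα, hβ, hpα, hpβ⟩ := C.exists_end_leaves
  have : Nonempty V := ⟨α⟩
  set N : Finset V := {v | G.degree v < 2} with hN
  have hmN : ∀ v, v ∈ N ↔ G.degree v < 2 := fun v => by simp [hN]
  clear_value N
  have hαN : α ∈ N := (hmN α).mpr hα
  have hβN : β ∈ N.erase α := Finset.mem_erase.mpr ⟨hαβ.symm, (hmN β).mpr hβ⟩
  set Λ := (N.erase α).erase β with hΛ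
  have hmΛ : ∀ v, v ∈ Λ ↔ v ≠ β ∧ v ≠ α ∧ G.degree v < 2 := fun v => by
    rw [hΛ, Finset.mem_erase, Finset.mem_erase, hmN]
  have hpΛ : ∀ v ∈ Λ, p v < s := fun v hv => C.lt v ((hmΛ v).mp hv).2.2
  have hsplit : ∀ (F : V → ℕ) (i : ℕ), ∑ v ∈ N with p v = i, F v =
      (if 0 = i then F α else 0) + ((if s - 1 = i then F β else 0) +
        ∑ v ∈ Λ with p v = i, F v) := fun F i => by
    rw [Finset.sum_filter, Finset.sum_filter, ← Finset.add_sum_erase _ _ hαN,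
      ← Finset.add_sum_erase _ _ hβN, hpα, hpβ]
  have hdeg : ∀ i < s, G.degree (w i) = (Λ.filter (p · = i)).card + 2 := fun i hi => by
    rw [C.degree_eq hi, ← hN, Finset.card_eq_sum_ones, hsplit, ← Finset.card_eq_sum_ones]
    split_ifs <;> omega
  have hE := C.leavesExcess_add_le Λ hdeg hpΛ
  have hm : G.edgeFinset.card = s + 1 + Λ.card := by
    have h1 := hC.1.card_edgeFinset
    have h2 := C.card_eq
    have h3 := Finset.card_erase_add_one hαN
    have h4 := Finset.card_erase_add_one hβN
    rw [← hN] at h2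
    rw [← hΛ] at h4
    omega
  set M := G.edgeFinset.card + ((s - 1) / 2 - 1 - G.leavesExcess) with hM
  obtain ⟨q, R, T, hTR, hRc, hTc, hRM, hqM, hqinj, hPinj, hPne, hPT, hPM⟩ :=
    exists_path_labels s (Λ.image p).card Λ.card M hspos Finset.card_image_le
      (fun h => by simpa using h) (by omega) (by omega)
  obtain ⟨z, hzR, hzinj, hSinj, hSM⟩ := exists_leg_labels Λ p s M _ hPinj hpΛ R T hTR hRc hTc
    hPT hPM
  -- Labels of all leaf edges, extended by zero to the spine.
  let y : V → ℕ := fun v => if v = α then q 0 else if v = β then q s else if v ∈ Λ then z v else 0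
  have hyα : y α = q 0 := if_pos rfl
  have hyβ : y β = q s := by simp [y, hαβ.symm]
  have hyΛ : ∀ v ∈ Λ, y v = z v := fun v hv => by
    have h := (hmΛ v).mp hv
    simp [y, h.1, h.2.1, hv]
  have hy0 : ∀ v, ¬ G.degree v < 2 → y v = 0 := fun v hv => by
    have h1 : v ≠ α := fun h => hv (h ▸ hα)
    have h2 : v ≠ β := fun h => hv (h ▸ hβ)
    have h3 : v ∉ Λ := fun h => hv ((hmΛ v).mp h).2.2
    simp [y, h1, h2, h3]
  have hcases : ∀ v, G.degree v < 2 → v = α ∨ v = β ∨ v ∈ Λ := fun v hv => by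
    rw [hmΛ]; tauto
  have hyM : ∀ v, G.degree v < 2 → (1 ≤ y v ∧ y v ≤ M) ∧ (y v = q 0 ∨ y v = q s ∨ y v ∈ R) := by
    intro v hv
    rcases hcases v hv with rfl | rfl | h
    · rw [hyα]; have := hqM 0 (by omega); exact ⟨⟨this.1, this.2.1⟩, Or.inl rfl⟩
    · rw [hyβ]; have := hqM s le_rfl; exact ⟨⟨this.1, this.2.1⟩, Or.inr (Or.inl rfl)⟩
    · rw [hyΛ v h]; exact ⟨hRM _ (hzR v h), Or.inr (Or.inr (hzR v h))⟩
  -- No leaf edge shares its label with a spine edge.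
  have hyq : ∀ v, G.degree v < 2 → ∀ i, 0 < i → i < s → y v ≠ q i := by
    intro v hv i hi0 his h
    rcases (hyM v hv).2 with h' | h' | h'
    · have := hqinj (show 0 ≤ s by omega) (show i ≤ s by omega) (h'.symm.trans h); omega
    · have := hqinj (show s ≤ s from le_rfl) (show i ≤ s by omega) (h'.symm.trans h); omega
    · exact (hqM i his.le).2.2 (h ▸ h')
  have hyinj : ∀ u v, G.degree u < 2 → G.degree v < 2 → y u = y v → u = v := by
    have h0s : q 0 ≠ q s := fun h => by
      have := hqinj (show 0 ≤ s by omega) (show s ≤ s from le_rfl) h; omega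
    have h0 := (hqM 0 (by omega)).2.2
    have h1 := (hqM s le_rfl).2.2
    intro u v hu hv h
    rcases hcases u hu with rfl | rfl | hu' <;> rcases hcases v hv with rfl | rfl | hv' <;>
      (try simp only [hyα, hyβ] at h) <;> (try rfl)
    · exact absurd h h0s
    · rw [hyΛ v hv'] at h; exact absurd (h ▸ hzR v hv') h0
    · exact absurd h.symm h0s
    · rw [hyΛ v hv'] at h; exact absurd (h ▸ hzR v hv') h1
    · rw [hyΛ u hu'] at h; exact absurd (h ▸ hzR u hu') h0
    · rw [hyΛ u hu'] at h; exact absurd (h ▸ hzR u hu') h1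
    · rw [hyΛ u hu', hyΛ v hv'] at h; exact hzinj hu' hv' h
  have hidx : ∀ v, ∃ i, ¬ G.degree v < 2 → i < s ∧ w i = v := fun v => by
    by_cases h : G.degree v < 2
    · exact ⟨0, fun h' => absurd h h'⟩
    · obtain ⟨i, hi⟩ := C.surj v (by omega)
      exact ⟨i, fun _ => hi⟩
  choose idx hidx using hidx
  have hnl : ∀ i < s, ¬ G.degree (w i) < 2 := fun i hi => by have := C.two_le i hi; omega
  have hidxw : ∀ i < s, idx (w i) = i := fun i hi =>
    C.inj (hidx _ (hnl i hi)).1 hi (hidx _ (hnl i hi)).2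
  -- An edge with a leaf end `v` has label `y v`, as `y` vanishes on the spine; the edge between
  -- the spine positions `i` and `i + 1` has label `q (i + 1)`.
  let f : Sym2 V → ℕ := Sym2.lift ⟨fun a b => y a + y b +
    if G.degree a < 2 ∨ G.degree b < 2 then 0 else q (max (idx a) (idx b)), fun a b => by
      dsimp only
      rw [add_comm (y a), max_comm]
      simp only [or_comm]⟩
  have hf : ∀ a b, f s(a, b) = y a + y b +
    if G.degree a < 2 ∨ G.degree b < 2 then 0 else q (max (idx a) (idx b)) := fun a b => rfl
  have hfl : ∀ v, G.degree v < 2 → ∀ i < s, f s(v, w i) = y v := fun v hv i hi => by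
    rw [hf, hy0 _ (hnl i hi), if_pos (Or.inl hv)]; omega
  have hfs : ∀ i, i + 1 < s → f s(w i, w (i + 1)) = q (i + 1) := fun i hi => by
    have h1 := hnl i (by omega)
    have h2 := hnl (i + 1) hi
    rw [hf, hy0 _ h1, hy0 _ h2, if_neg (by tauto), hidxw i (by omega), hidxw _ hi]
    simp
  have hedge : ∀ e ∈ G.edgeFinset, (∃ v, G.degree v < 2 ∧ e = s(v, w (p v))) ∨
      ∃ i, i + 1 < s ∧ e = s(w i, w (i + 1)) := by
    intro e he
    induction e with | _ a b =>
    rw [SimpleGraph.mem_edgeFinset, SimpleGraph.mem_edgeSet] at he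
    by_cases ha : G.degree a < 2
    · exact Or.inl ⟨a, ha, by rw [(C.leaf a ha b).mp he]⟩
    by_cases hb : G.degree b < 2
    · exact Or.inl ⟨b, hb, by rw [(C.leaf b hb a).mp he.symm, Sym2.eq_swap]⟩
    obtain ⟨i, hi, rfl⟩ := C.surj a (by omega)
    obtain ⟨j, hj, rfl⟩ := C.surj b (by omega)
    rcases (C.adj i hi j hj).mp he with rfl | rfl
    · exact Or.inr ⟨i, hj, rfl⟩
    · exact Or.inr ⟨j, hi, Sym2.eq_swap⟩
  have hsl : ∀ v, G.degree v < 2 → G.vertexSum f v = y v := fun v hv => by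
    have : G.neighborFinset v = {w (p v)} := by
      ext u
      rw [SimpleGraph.mem_neighborFinset, C.leaf v hv, Finset.mem_singleton]
    rw [vertexSum_eq_sum_neighborFinset, this, Finset.sum_singleton, hfl v hv _ (C.lt v hv)]
  have hss : ∀ i < s, G.vertexSum f (w i) = q i + q (i + 1) + ∑ v ∈ Λ with p v = i, z v := by
    intro i hi
    have hz : ∑ v ∈ Λ with p v = i, f s(w i, v) = ∑ v ∈ Λ with p v = i, z v :=
      Finset.sum_congr rfl fun v hv => by
        have hv := (Finset.mem_filter.mp hv).1
        rw [Sym2.eq_swap, hfl v ((hmΛ v).mp hv).2.2 i hi, hyΛ v hv]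
    have hleft : (if 0 < i then f s(w i, w (i - 1)) else 0) +
        (if 0 = i then f s(w i, α) else 0) = q i := by
      rcases i with _ | i
      · rw [if_neg (by omega), if_pos rfl, Sym2.eq_swap, hfl α hα 0 hi, hyα, zero_add]
      · rw [if_pos (by omega), if_neg (by omega), Sym2.eq_swap, Nat.add_sub_cancel, hfs i hi,
          add_zero]
    have hright : (if i + 1 < s then f s(w i, w (i + 1)) else 0) +
        (if s - 1 = i then f s(w i, β) else 0) = q (i + 1) := by
      by_cases h : i + 1 < s
      · rw [if_pos h, if_neg (by omega), hfs i h, add_zero]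
      · rw [if_neg h, if_pos (by omega), Sym2.eq_swap, hfl β hβ i hi, hyβ, zero_add]
        congr 1
        omega
    rw [vertexSum_eq_sum_neighborFinset, C.sum_neighborFinset _ hi, ← hN, hsplit, hz]
    omega
  have hmix : ∀ v, G.degree v < 2 → ∀ i < s, G.vertexSum f v ≠ G.vertexSum f (w i) := by
    intro v hv i hi h
    rw [hsl v hv, hss i hi] at h
    obtain ⟨hvM, hv'⟩ := hyM v hv
    obtain ⟨h1, h2, h3⟩ := hPne i hi
    rcases hSM i hi with h4 | h4
    · rw [h4] at h
      rcases hv' with h' | h' | h'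
      · exact h2 (h.symm.trans h')
      · exact h3 (h.symm.trans h')
      · exact h1 (h ▸ h')
    · omega
  refine ⟨f, fun e he => ?_, fun e he e' he' h => ?_, fun u v h => ?_⟩
  · rw [Finset.mem_Icc]
    rcases hedge e he with ⟨v, hv, rfl⟩ | ⟨i, hi, rfl⟩
    · rw [hfl v hv _ (C.lt v hv)]
      exact (hyM v hv).1
    · rw [hfs i hi]
      have := hqM (i + 1) hi.le
      exact ⟨this.1, this.2.1⟩
  · rcases hedge e he with ⟨v, hv, rfl⟩ | ⟨i, hi, rfl⟩ <;>
      rcases hedge e' he' with ⟨v', hv', rfl⟩ | ⟨i', hi', rfl⟩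
    · rw [hfl v hv _ (C.lt v hv), hfl v' hv' _ (C.lt v' hv')] at h
      rw [hyinj v v' hv hv' h]
    · rw [hfl v hv _ (C.lt v hv), hfs i' hi'] at h
      exact absurd h (hyq v hv _ (by omega) hi')
    · rw [hfl v' hv' _ (C.lt v' hv'), hfs i hi] at h
      exact absurd h.symm (hyq v' hv' _ (by omega) hi)
    · rw [hfs i hi, hfs i' hi'] at h
      have := hqinj (show i + 1 ≤ s by omega) (show i' + 1 ≤ s by omega) h
      rw [show i = i' by omega]
  · by_cases hu : G.degree u < 2 <;> by_cases hv : G.degree v < 2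
    · rw [hsl u hu, hsl v hv] at h
      exact hyinj u v hu hv h
    · obtain ⟨i, hi, rfl⟩ := C.surj v (by omega)
      exact absurd h (hmix u hu i hi)
    · obtain ⟨i, hi, rfl⟩ := C.surj u (by omega)
      exact absurd h.symm (hmix v hv i hi)
    · obtain ⟨i, hi, rfl⟩ := C.surj u (by omega)
      obtain ⟨j, hj, rfl⟩ := C.surj v (by omega)
      rw [hss i hi, hss j hj] at h
      rw [hSinj hi hj h]
end

section
/- Every caterpillar of order n is (⌊(n-1)/2⌋ - 2)-antimagic. -/
/-!
The caterpillar has spine `v₀, …, v_{s-1}`. Picking a leaf `A` at `v₀` and a different leaf `B` at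
`v_{s-1}` gives a path with edges `e₀, …, e_s`; let `X` be the set of the remaining `x` leaves and
put `m = s + 1 + x`, the number of edges. The labels `k + 1, …, k + m` are used. They are split
into a low block of size `s / 2 + 1`, a middle block of size `x` ending at `H`, and a high block of
size `(s + 1) / 2`. The path edges take alternately the low and the high labels, each block in
decreasing order, starting with the largest low label on `e₀` (`pathLabel`); the pendant edges at
`X` take the middle block.

* The two path edges at `v_i` contribute `H + k + s + 1 - i`, which is strictly decreasing in `i`.
* A pendant edge has label at most `H + 1`, while every spine vertex has sum at least `H + k + 2`,
  so leaves never collide with spine vertices.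
* A spine vertex with a leaf in `X` gains at least `k + s / 2 + 2` and so exceeds every spine vertex
  without one, because `k ≥ s / 2 - 1` as soon as `x ≥ 1`.
* Two spine vertices which both have leaves in `X` are separated by a suitable distribution of the
  middle block, found greedily (`exists_separating_labels`).
-/

open Finset SimpleGraph
open scoped Classical

variable {V : Type*}

/-! ### Distributing the middle block -/

/-- The elements of `X` can be labelled injectively by `d + 1, …, d + |X|` so that, for the classes
`c⁻¹(i)` that meet `X`, the initial weight `T i` plus the labels in the class are distinct.
The labels are given out in increasing order: while some class has at least two unlabelled elements,
one of them takes the smallest free label; once every class is a singleton, the class of least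
current weight does. -/
theorem exists_separating_labels {ι : Type*} (c : V → ι) (N : ℕ) :
    ∀ (X : Finset V) (T : ι → ℕ) (d : ℕ), X.card = N →
    ∃ q : V → ℕ, Set.InjOn q ↑X ∧ (∀ w ∈ X, d < q w ∧ q w ≤ d + N) ∧
      ∀ u ∈ X, ∀ w ∈ X, c u ≠ c w →
        T (c u) + ∑ z ∈ X with c z = c u, q z ≠ T (c w) + ∑ z ∈ X with c z = c w, q z := by
  induction N with
  | zero =>
    intro X T d hX
    rw [Finset.card_eq_zero] at hX
    subst hX
    exact ⟨fun _ => 0, by simp, by simp, by simp⟩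
  | succ N ih =>
    intro X T d hX
    -- Labelling `w` by `d + 1` first reduces the problem to `X.erase w`.
    have step : ∀ w ∈ X, ∀ q' : V → ℕ, Set.InjOn q' ↑(X.erase w) →
        (∀ z ∈ X.erase w, d + 1 < q' z ∧ q' z ≤ d + 1 + N) →
        Set.InjOn (Function.update q' w (d + 1)) ↑X ∧
        (∀ z ∈ X, d < Function.update q' w (d + 1) z ∧
          Function.update q' w (d + 1) z ≤ d + (N + 1)) ∧
        ∀ i, ∑ z ∈ X with c z = i, Function.update q' w (d + 1) z =
          (if c w = i then d + 1 else 0) + ∑ z ∈ X.erase w with c z = i, q' z := by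
      intro w hw q' hinj hr
      refine ⟨?_, ?_, ?_⟩
      · intro y hy z hz h
        by_cases h1 : y = w <;> by_cases h2 : z = w
        · rw [h1, h2]
        · subst h1
          have := hr z (Finset.mem_erase.2 ⟨h2, hz⟩)
          simp [Function.update_of_ne h2] at h
          omega
        · subst h2
          have := hr y (Finset.mem_erase.2 ⟨h1, hy⟩)
          simp [Function.update_of_ne h1] at h
          omega
        · rw [Function.update_of_ne h1, Function.update_of_ne h2] at h
          exact hinj (Finset.mem_coe.2 (Finset.mem_erase.2 ⟨h1, hy⟩))
            (Finset.mem_coe.2 (Finset.mem_erase.2 ⟨h2, hz⟩)) h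
      · intro z hz
        by_cases h2 : z = w
        · subst h2; simp
        · have := hr z (Finset.mem_erase.2 ⟨h2, hz⟩)
          rw [Function.update_of_ne h2]
          omega
      · intro i
        rw [Finset.sum_filter, Finset.sum_filter, ← Finset.add_sum_erase X _ hw]
        congr 1
        · simp
        · refine Finset.sum_congr rfl fun z hz => ?_
          rw [Function.update_of_ne (Finset.ne_of_mem_erase hz)]
    by_cases hc : Set.InjOn c ↑X
    · have hne : X.Nonempty := by rw [← Finset.card_pos]; omega
      obtain ⟨w, hw, hmin⟩ := Finset.exists_min_image X (fun z => T (c z)) hne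
      obtain ⟨q', hinj, hr, hs⟩ := ih (X.erase w) T (d + 1) (by rw [Finset.card_erase_of_mem hw, hX]; rfl)
      obtain ⟨h1, h2, h3⟩ := step w hw q' hinj hr
      refine ⟨_, h1, h2, ?_⟩
      have hzero : ∑ z ∈ X.erase w with c z = c w, q' z = 0 := by
        rw [Finset.filter_false_of_mem, Finset.sum_empty]
        intro z hz he
        exact (Finset.mem_erase.1 hz).1 (hc (Finset.mem_erase.1 hz).2 hw he)
      have hbig : ∀ u ∈ X, c u ≠ c w → T (c w) + (d + 1) <
          T (c u) + ∑ z ∈ X.erase w with c z = c u, q' z := by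
        intro u hu huw
        have hu' : u ∈ X.erase w := Finset.mem_erase.2 ⟨fun h => huw (by rw [h]), hu⟩
        have h4 : q' u ≤ ∑ z ∈ X.erase w with c z = c u, q' z :=
          Finset.single_le_sum (f := q') (fun _ _ => Nat.zero_le _) (by simpa using hu')
        have := hmin u hu
        have := hr u hu'
        omega
      intro u hu v hv huv
      rw [h3, h3]
      by_cases hu' : c w = c u
      · rw [← hu', hzero, if_pos rfl, if_neg (by rw [hu']; exact huv)]
        have := hbig v hv (by rw [hu']; exact huv.symm)
        omega
      · by_cases hv' : c w = c v
        · rw [← hv', hzero, if_pos rfl, if_neg (by rw [hv']; exact huv.symm)]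
          have := hbig u hu (by rw [hv']; exact huv)
          omega
        · rw [if_neg hu', if_neg hv', zero_add, zero_add]
          refine hs u ?_ v ?_ huv
          · exact Finset.mem_erase.2 ⟨fun h => hu' (by rw [h]), hu⟩
          · exact Finset.mem_erase.2 ⟨fun h => hv' (by rw [h]), hv⟩
    · simp only [Set.InjOn, not_forall] at hc
      obtain ⟨w, hw, w', hw', hcw, hne⟩ := hc
      obtain ⟨q', hinj, hr, hs⟩ := ih (X.erase w) (fun i => T i + if c w = i then d + 1 else 0)
        (d + 1) (by rw [Finset.card_erase_of_mem hw, hX]; rfl)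
      obtain ⟨h1, h2, h3⟩ := step w hw q' hinj hr
      refine ⟨_, h1, h2, ?_⟩
      -- The class of `w` still meets `X.erase w`, in `w'`.
      have hrep : ∀ u ∈ X, ∃ u' ∈ X.erase w, c u' = c u := by
        intro u hu
        by_cases h : u = w
        · exact ⟨w', Finset.mem_erase.2 ⟨fun h => hne h.symm, hw'⟩, by rw [h, hcw]⟩
        · exact ⟨u, Finset.mem_erase.2 ⟨h, hu⟩, rfl⟩
      intro u hu v hv huv
      rw [h3, h3, ← add_assoc, ← add_assoc]
      obtain ⟨u', hu', eu⟩ := hrep u hu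
      obtain ⟨v', hv', ev⟩ := hrep v hv
      have := hs u' hu' v' hv' (by rw [eu, ev]; exact huv)
      rwa [eu, ev] at this

/-! ### Coordinates on a caterpillar -/

/-- Coordinates on a caterpillar: `L` is the set of leaves, `pos` numbers the spine by
`0, …, s - 1` and gives to each leaf the number of its spine neighbour, and `A`, `B` are distinct
leaves hanging at the two ends of the spine (which coincide when `s = 1`). -/
structure CatCoords [Fintype V] (G : SimpleGraph V) (s : ℕ) (pos : V → ℕ) (L : Finset V)
    (A B : V) : Prop where
  card : L.card + s = Fintype.card V
  pos_lt : ∀ v, pos v < s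
  surj : ∀ i < s, ∃ v ∉ L, pos v = i
  inj : ∀ u ∉ L, ∀ v ∉ L, pos u = pos v → u = v
  adj_spine : ∀ u ∉ L, ∀ v ∉ L, (G.Adj u v ↔ pos u + 1 = pos v ∨ pos v + 1 = pos u)
  not_adj_leaf : ∀ u ∈ L, ∀ v ∈ L, ¬ G.Adj u v
  adj_leaf : ∀ u ∈ L, ∀ v ∉ L, (G.Adj u v ↔ pos u = pos v)
  hA : A ∈ L
  hB : B ∈ L
  hAB : A ≠ B
  posA : pos A = 0
  posB : pos B + 1 = s

theorem exists_catCoords [Fintype V] (G : SimpleGraph V) (hC : G.IsCaterpillar) :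
    ∃ s pos L A B, CatCoords G s pos L A B := by
  obtain ⟨hT, h3, ⟨φ⟩⟩ := hC
  have hnt : Nontrivial V := Fintype.one_lt_card_iff_nontrivial.1 (by omega)
  have hdeg : ∀ v, 0 < G.degree v := fun v =>
    hT.connected.preconnected.degree_pos_of_nontrivial v
  have hspine : ∀ v, v ∈ G.spine ↔ 2 ≤ G.degree v := fun v => Iff.rfl
  have huniq : ∀ u, u ∉ G.spine → ∃ w, ∀ z, G.Adj u z ↔ z = w := by
    intro u hu
    have h1 : (G.neighborFinset u).card = 1 := by
      have := hdeg u
      rw [hspine] at hu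
      rw [G.card_neighborFinset_eq_degree]; omega
    obtain ⟨w, hw⟩ := Finset.card_eq_one.1 h1
    refine ⟨w, fun z => ?_⟩
    rw [← SimpleGraph.mem_neighborFinset, hw, Finset.mem_singleton]
  -- Two adjacent leaves would form a whole component.
  have hleaf : ∀ u, u ∉ G.spine → ∀ w, w ∉ G.spine → ¬ G.Adj u w := by
    intro u hu w hw huw
    obtain ⟨u', hu'⟩ := huniq u hu
    obtain ⟨w', hw'⟩ := huniq w hw
    have e1 : w = u' := (hu' w).1 huw
    have e2 : u = w' := (hw' u).1 huw.symm
    subst e1 e2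
    have hall : ∀ x y, G.Walk x y → (x = u ∨ x = w) → (y = u ∨ y = w) := by
      intro x y p
      induction p with
      | nil => exact id
      | cons h p ih =>
        intro hx
        apply ih
        rcases hx with rfl | rfl
        · exact Or.inr ((hu' _).1 h)
        · exact Or.inl ((hw' _).1 h)
    have hsub : (Finset.univ : Finset V) ⊆ {u, w} := by
      intro y _
      obtain ⟨p⟩ := hT.connected.preconnected u y
      simpa using hall u y p (Or.inl rfl)
    have h4 := Finset.card_le_card hsub
    have h5 : ({u, w} : Finset V).card ≤ 2 := Finset.card_le_two
    rw [Finset.card_univ] at h4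
    omega
  have hpar : ∀ v : V, ∃ w : G.spine, (v ∈ G.spine → w.1 = v) ∧
      (v ∉ G.spine → ∀ z, G.Adj v z ↔ z = w.1) := by
    intro v
    by_cases hv : v ∈ G.spine
    · exact ⟨⟨v, hv⟩, fun _ => rfl, fun h => absurd hv h⟩
    · obtain ⟨w, hw⟩ := huniq v hv
      refine ⟨⟨w, ?_⟩, fun h => absurd h hv, fun _ => hw⟩
      by_contra hws
      exact hleaf v hv w hws ((hw w).2 rfl)
  choose par hpar1 hpar2 using hpar
  let pos : V → ℕ := fun v => (φ (par v)).val
  let L : Finset V := Finset.univ.filter (fun v => v ∉ G.spine)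
  have hL : ∀ v, v ∉ L ↔ v ∈ G.spine := by intro v; simp [L]
  have hL' : ∀ v, v ∈ L ↔ v ∉ G.spine := by intro v; simp [L]
  have hpos : ∀ v (hv : v ∈ G.spine), pos v = (φ ⟨v, hv⟩).val := by
    intro v hv
    have : par v = ⟨v, hv⟩ := Subtype.ext (hpar1 v hv)
    simp only [pos, this]
  have hlt : ∀ v, pos v < G.spineOrder := fun v => (φ (par v)).isLt
  have hinj : ∀ u ∉ L, ∀ v ∉ L, pos u = pos v → u = v := by
    intro u hu v hv h
    rw [hL] at hu hv
    rw [hpos u hu, hpos v hv] at h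
    exact congrArg Subtype.val (φ.injective (Fin.ext h))
  have hsurj : ∀ i < G.spineOrder, ∃ v ∉ L, pos v = i := by
    intro i hi
    refine ⟨(φ.symm ⟨i, hi⟩).1, ?_, ?_⟩
    · rw [hL]; exact (φ.symm ⟨i, hi⟩).2
    · rw [hpos _ (φ.symm ⟨i, hi⟩).2]
      simp
  have hadj : ∀ u ∉ L, ∀ v ∉ L, (G.Adj u v ↔ pos u + 1 = pos v ∨ pos v + 1 = pos u) := by
    intro u hu v hv
    rw [hL] at hu hv
    rw [hpos u hu, hpos v hv]
    have h1 : (G.induce G.spine).Adj ⟨u, hu⟩ ⟨v, hv⟩ ↔ G.Adj u v := by simp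
    rw [← h1, ← φ.map_adj_iff, SimpleGraph.pathGraph_adj]
  have hadjl : ∀ u ∈ L, ∀ v ∉ L, (G.Adj u v ↔ pos u = pos v) := by
    intro u hu v hv
    have hu' := (hL' u).1 hu
    have hv' := (hL v).1 hv
    rw [hpar2 u hu' v]
    constructor
    · intro h
      have : par u = par v := Subtype.ext (by rw [hpar1 v hv', h])
      simp only [pos, this]
    · intro h
      have : par u = par v := φ.injective (Fin.ext h)
      rw [this, hpar1 v hv']
  have hspos : 0 < G.spineOrder := lt_of_le_of_lt (Nat.zero_le _) (hlt (Classical.arbitrary V))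
  have hcard : L.card + G.spineOrder = Fintype.card V := by
    have h1 : G.spineOrder = (Finset.univ.filter (fun v => v ∈ G.spine)).card := by
      rw [SimpleGraph.spineOrder, Nat.card_eq_fintype_card, Fintype.card_subtype]
    rw [h1, ← Finset.card_univ, add_comm]
    exact Finset.card_filter_add_card_filter_not _
  have htwo : ∀ v ∉ L, ∃ x y, x ≠ y ∧ G.Adj v x ∧ G.Adj v y := by
    intro v hv
    have h2 : 1 < (G.neighborFinset v).card := by
      rw [G.card_neighborFinset_eq_degree]; exact (hL v).1 hv
    obtain ⟨x, hx, y, hy, hxy⟩ := Finset.one_lt_card.1 h2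
    rw [SimpleGraph.mem_neighborFinset] at hx hy
    exact ⟨x, y, hxy, hx, hy⟩
  have main : ∃ A B, A ∈ L ∧ B ∈ L ∧ A ≠ B ∧ pos A = 0 ∧ pos B + 1 = G.spineOrder := by
    obtain ⟨a, ha, ha0⟩ := hsurj 0 hspos
    obtain ⟨b, hb, hb0⟩ := hsurj (G.spineOrder - 1) (by omega)
    by_cases hs : G.spineOrder = 1
    · obtain ⟨x, y, hxy, hx, hy⟩ := htwo a ha
      have hin : ∀ z, G.Adj a z → z ∈ L := by
        intro z hz
        by_contra hzL
        have := (hadj a ha z hzL).1 hz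
        have := hlt a
        have := hlt z
        omega
      refine ⟨x, y, hin x hx, hin y hy, hxy, ?_, ?_⟩
      · have := hlt x; omega
      · have := hlt y; omega
    · -- An end of the spine has just one spine neighbour, hence a leaf.
      have key : ∀ v ∉ L, (pos v = 0 ∨ pos v + 1 = G.spineOrder) → ∃ z ∈ L, pos z = pos v := by
        intro v hv hend
        obtain ⟨x, y, hxy, hx, hy⟩ := htwo v hv
        by_cases hxL : x ∈ L
        · exact ⟨x, hxL, (hadjl x hxL v hv).1 hx.symm⟩
        by_cases hyL : y ∈ L
        · exact ⟨y, hyL, (hadjl y hyL v hv).1 hy.symm⟩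
        exfalso
        apply hxy
        apply hinj x hxL y hyL
        have h1 := (hadj v hv x hxL).1 hx
        have h2 := (hadj v hv y hyL).1 hy
        have := hlt x
        have := hlt y
        omega
      obtain ⟨A, hA, hA0⟩ := key a ha (Or.inl ha0)
      obtain ⟨B, hB, hB0⟩ := key b hb (Or.inr (by omega))
      refine ⟨A, B, hA, hB, ?_, by omega, by omega⟩
      rintro rfl
      omega
  obtain ⟨A, B, hA, hB, hAB, hA0, hB0⟩ := main
  exact ⟨G.spineOrder, pos, L, A, B, hcard, hlt, hsurj, hinj, hadj,
    fun u hu v hv => hleaf u ((hL' u).1 hu) v ((hL' v).1 hv), hadjl, hA, hB, hAB, hA0, hB0⟩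

/-! ### Labels of the path through the spine -/

/-- The label of the `i`-th edge (`0 ≤ i ≤ s`) of the path through the spine: even positions run
down through the low block `k + 1, …, k + s / 2 + 1`, odd positions run down through the high block
`H + 1, …, H + (s + 1) / 2`. -/
def pathLabel (s k H i : ℕ) : ℕ :=
  if i % 2 = 0 then k + s / 2 + 1 - i / 2 else H + (s + 1) / 2 - i / 2

theorem pathLabel_add {s k H i : ℕ} (hi : i < s) :
    pathLabel s k H i + pathLabel s k H (i + 1) + i = H + k + s + 1 := by
  unfold pathLabel
  split_ifs <;> omega

theorem pathLabel_inj {s k H i j : ℕ} (hi : i ≤ s) (hj : j ≤ s) (hH : k + s / 2 + 1 ≤ H)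
    (h : pathLabel s k H i = pathLabel s k H j) : i = j := by
  unfold pathLabel at h
  split_ifs at h <;> omega

theorem pathLabel_range {s k H i : ℕ} (hi : i ≤ s) :
    (k + 1 ≤ pathLabel s k H i ∧ pathLabel s k H i ≤ k + s / 2 + 1) ∨
      (H + 1 ≤ pathLabel s k H i ∧ pathLabel s k H i ≤ H + (s + 1) / 2) := by
  unfold pathLabel
  split_ifs <;> omega

theorem pathLabel_last {s k H : ℕ} (hH : k + s / 2 + 1 ≤ H) : pathLabel s k H s ≤ H + 1 := by
  unfold pathLabel
  split_ifs <;> omega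

/-! ### Edge labels and vertex sums in coordinates -/

/-- The edge labelling obtained from labels `g` of the leaves and labels `P` of the path edges: a
pendant edge takes the label of its leaf, the spine edge between positions `i` and `i + 1` takes
`P (i + 1)`. -/
noncomputable def catLabel (pos : V → ℕ) (L : Finset V) (g : V → ℕ) (P : ℕ → ℕ) : Sym2 V → ℕ :=
  Sym2.lift ⟨fun u v => if u ∈ L ∧ v ∉ L then g u else if v ∈ L ∧ u ∉ L then g v
    else P (max (pos u) (pos v)), by
      intro u v
      simp only [max_comm (pos v) (pos u)]
      split_ifs <;> first | rfl | (exfalso; tauto)⟩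

theorem catLabel_leaf {pos : V → ℕ} {L : Finset V} {g : V → ℕ} {P : ℕ → ℕ} {u v : V}
    (hu : u ∈ L) (hv : v ∉ L) : catLabel pos L g P s(u, v) = g u := by
  simp [catLabel, hu, hv]

theorem catLabel_spine {pos : V → ℕ} {L : Finset V} {g : V → ℕ} {P : ℕ → ℕ} {u v : V}
    (hu : u ∉ L) (hv : v ∉ L) : catLabel pos L g P s(u, v) = P (max (pos u) (pos v)) := by
  simp [catLabel, hu, hv]

theorem vertexSum_eq_sum_ite [Fintype V] (G : SimpleGraph V) (f : Sym2 V → ℕ) (v : V) :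
    G.vertexSum f v = ∑ w, if G.Adj v w then f s(v, w) else 0 := by
  rw [SimpleGraph.vertexSum, ← Finset.sum_filter]
  symm
  refine Finset.sum_bij (fun w _ => s(v, w)) ?_ ?_ ?_ ?_
  · intro w hw
    simpa [SimpleGraph.mem_incidenceSet] using hw
  · intro a _ b _ h
    exact Sym2.congr_right.1 h
  · intro e he
    rw [SimpleGraph.mem_incidenceFinset] at he
    obtain ⟨h1, w, rfl⟩ := he
    exact ⟨w, by simpa using h1, rfl⟩
  · intro w _
    rfl

namespace CatCoords

variable [Fintype V] {G : SimpleGraph V} {s : ℕ} {pos : V → ℕ} {L : Finset V} {A B : V}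

theorem vertexSum_leaf (h : CatCoords G s pos L A B) (g : V → ℕ) (P : ℕ → ℕ) {v : V}
    (hv : v ∈ L) : G.vertexSum (catLabel pos L g P) v = g v := by
  obtain ⟨w, hw, hvw⟩ := h.surj (pos v) (h.pos_lt v)
  rw [vertexSum_eq_sum_ite, Finset.sum_eq_single w]
  · rw [if_pos ((h.adj_leaf v hv w hw).2 hvw.symm), catLabel_leaf hv hw]
  · intro z _ hz
    rw [if_neg]
    intro ha
    by_cases hzL : z ∈ L
    · exact h.not_adj_leaf v hv z hzL ha
    · exact hz (h.inj z hzL w hw (by rw [hvw, ← (h.adj_leaf v hv z hzL).1 ha]))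
  · simp

/-- The leaves `A` and `B` carry the end labels `P 0` and `P s` of the path, so that every spine
vertex, the two end ones included, sees the two path labels `P (pos v)` and `P (pos v + 1)`. -/
theorem vertexSum_spine (h : CatCoords G s pos L A B) (g : V → ℕ) (P : ℕ → ℕ)
    (gA : g A = P 0) (gB : g B = P s) {v : V} (hv : v ∉ L) :
    G.vertexSum (catLabel pos L g P) v =
      P (pos v) + P (pos v + 1) + ∑ w ∈ (L.erase A).erase B with pos w = pos v, g w := by
  have hlt := h.pos_lt v
  have hposB := h.posB
  have hleaf : ∑ w ∈ L, (if G.Adj v w then catLabel pos L g P s(v, w) else 0) =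
      ((if pos v = 0 then P 0 else 0) + if pos v + 1 = s then P s else 0) +
        ∑ w ∈ (L.erase A).erase B with pos w = pos v, g w := by
    have h1 : ∀ w ∈ L, (if G.Adj v w then catLabel pos L g P s(v, w) else 0) =
        if pos w = pos v then g w else 0 := by
      intro w hw
      rw [G.adj_comm, Sym2.eq_swap, catLabel_leaf hw hv]
      simp only [h.adj_leaf w hw v hv]
    rw [Finset.sum_congr rfl h1, ← Finset.add_sum_erase L _ h.hA,
      ← Finset.add_sum_erase (L.erase A) _ (Finset.mem_erase.2 ⟨h.hAB.symm, h.hB⟩),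
      Finset.sum_filter, gA, gB, h.posA, add_assoc]
    have e1 : (0 = pos v) = (pos v = 0) := propext eq_comm
    have e2 : (pos B = pos v) = (pos v + 1 = s) := propext (by omega)
    simp only [e1, e2]
  have hsp : ∑ w ∈ Lᶜ, (if G.Adj v w then catLabel pos L g P s(v, w) else 0) =
      ∑ j ∈ Finset.range s, ((if j + 1 = pos v then P (pos v) else 0) +
        if j = pos v + 1 then P (pos v + 1) else 0) := by
    refine Finset.sum_bij (fun w _ => pos w) ?_ ?_ ?_ ?_
    · intro w _
      exact Finset.mem_range.2 (h.pos_lt w)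
    · intro a ha b hb hab
      exact h.inj a (Finset.mem_compl.1 ha) b (Finset.mem_compl.1 hb) hab
    · intro j hj
      obtain ⟨w, hw, hwj⟩ := h.surj j (Finset.mem_range.1 hj)
      exact ⟨w, Finset.mem_compl.2 hw, hwj⟩
    · intro w hw
      have hw' := Finset.mem_compl.1 hw
      rw [catLabel_spine hv hw']
      simp only [h.adj_spine v hv w hw']
      by_cases c1 : pos w + 1 = pos v
      · rw [if_pos (Or.inr c1), if_pos c1, if_neg (by omega), max_eq_left (by omega), add_zero]
      · by_cases c2 : pos w = pos v + 1
        · rw [if_pos (Or.inl c2.symm), if_neg c1, if_pos c2, max_eq_right (by omega), c2, zero_add]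
        · rw [if_neg (by omega), if_neg c1, if_neg c2]
  have hs1 : ∑ j ∈ Finset.range s, (if j + 1 = pos v then P (pos v) else 0) =
      if pos v = 0 then 0 else P (pos v) := by
    by_cases h0 : pos v = 0
    · rw [if_pos h0]
      exact Finset.sum_eq_zero fun j _ => if_neg (by omega)
    · rw [if_neg h0, Finset.sum_eq_single (pos v - 1)]
      · exact if_pos (by omega)
      · intro j _ hj
        exact if_neg (by omega)
      · intro hj
        exact absurd (Finset.mem_range.2 (by omega)) hj
  have hs2 : ∑ j ∈ Finset.range s, (if j = pos v + 1 then P (pos v + 1) else 0) =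
      if pos v + 1 = s then 0 else P (pos v + 1) := by
    rw [Finset.sum_ite_eq' (Finset.range s) (pos v + 1) (fun _ => P (pos v + 1))]
    simp only [Finset.mem_range]
    split_ifs <;> first | rfl | omega
  rw [vertexSum_eq_sum_ite, ← Finset.sum_add_sum_compl L, hleaf, hsp, Finset.sum_add_distrib,
    hs1, hs2]
  have e0 : pos v = 0 → P (pos v) = P 0 := fun c => by rw [c]
  have es : pos v + 1 = s → P (pos v + 1) = P s := fun c => by rw [c]
  by_cases c1 : pos v = 0 <;> by_cases c2 : pos v + 1 = s
  · simp only [if_pos c1, if_pos c2, e0 c1, es c2]; omega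
  · simp only [if_pos c1, if_neg c2, e0 c1]; omega
  · simp only [if_neg c1, if_pos c2, es c2]; omega
  · simp only [if_neg c1, if_neg c2]; omega

/-- An edge is pendant, or joins consecutive spine positions. -/
theorem edge_cases (h : CatCoords G s pos L A B) {e : Sym2 V} (he : e ∈ G.edgeFinset) :
    (∃ u ∈ L, ∃ v ∉ L, pos u = pos v ∧ e = s(u, v)) ∨
      ∃ u ∉ L, ∃ v ∉ L, pos u + 1 = pos v ∧ e = s(u, v) := by
  induction e using Sym2.ind with
  | _ u v =>
    rw [SimpleGraph.mem_edgeFinset, SimpleGraph.mem_edgeSet] at he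
    by_cases hu : u ∈ L <;> by_cases hv : v ∈ L
    · exact absurd he (h.not_adj_leaf u hu v hv)
    · exact Or.inl ⟨u, hu, v, hv, (h.adj_leaf u hu v hv).1 he, rfl⟩
    · exact Or.inl ⟨v, hv, u, hu, (h.adj_leaf v hv u hu).1 he.symm, Sym2.eq_swap⟩
    · rcases (h.adj_spine u hu v hv).1 he with h1 | h1
      · exact Or.inr ⟨u, hu, v, hv, h1, rfl⟩
      · exact Or.inr ⟨v, hv, u, hu, h1, Sym2.eq_swap⟩

end CatCoords

/-! ### Choice of the labels -/

/-- Every caterpillar of order `n` is `(⌊(n-1)/2⌋ - 2)`-antimagic. -/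
theorem caterpillar_isAntimagic_of_order [Fintype V] (G : SimpleGraph V)
    (hC : G.IsCaterpillar) (n : ℕ) (hn : n = Fintype.card V) :
    G.IsAntimagic ((n - 1) / 2 - 2) := by
  have hE : G.edgeFinset.card + 1 = n := by rw [hn]; exact hC.1.card_edgeFinset
  obtain ⟨s, pos, L, A, B, h⟩ := exists_catCoords G hC
  have hBA : B ∈ L.erase A := Finset.mem_erase.2 ⟨h.hAB.symm, h.hB⟩
  obtain ⟨X, hX⟩ : ∃ X, X = (L.erase A).erase B := ⟨_, rfl⟩
  have hXmem : ∀ w, w ∈ X ↔ w ≠ B ∧ w ≠ A ∧ w ∈ L := by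
    intro w; rw [hX, Finset.mem_erase, Finset.mem_erase]
  have hXc : X.card + 2 + s = n := by
    have h1 := Finset.card_erase_add_one h.hA
    have h2 := Finset.card_erase_add_one hBA
    have h3 := h.card
    rw [← hX] at h2
    omega
  obtain ⟨k, hk⟩ : ∃ k, k = (n - 1) / 2 - 2 := ⟨_, rfl⟩
  rw [← hk]
  obtain ⟨H, hH⟩ : ∃ H, H = k + s / 2 + 1 + X.card := ⟨_, rfl⟩
  obtain ⟨P, hP⟩ : ∃ P, P = pathLabel s k H := ⟨_, rfl⟩
  have hPadd : ∀ i < s, P i + P (i + 1) + i = H + k + s + 1 := by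
    intro i hi; rw [hP]; exact pathLabel_add hi
  have hPinj : ∀ i ≤ s, ∀ j ≤ s, P i = P j → i = j := by
    intro i hi j hj; rw [hP]; exact pathLabel_inj hi hj (by omega)
  have hPr : ∀ i ≤ s, (k + 1 ≤ P i ∧ P i ≤ k + s / 2 + 1) ∨
      (H + 1 ≤ P i ∧ P i ≤ H + (s + 1) / 2) := by
    intro i hi; rw [hP]; exact pathLabel_range hi
  have hPs : P s ≤ H + 1 := by rw [hP]; exact pathLabel_last (by omega)
  have hP0 : P 0 ≤ H := by rw [hP]; simp [pathLabel]; omega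
  obtain ⟨q, hqinj, hqr, hqs⟩ := exists_separating_labels pos X.card X
    (fun i => P i + P (i + 1)) (k + s / 2 + 1) rfl
  obtain ⟨g, hg⟩ : ∃ g : V → ℕ, g = fun w => if w = A then P 0 else if w = B then P s else q w :=
    ⟨_, rfl⟩
  have gA : g A = P 0 := by simp [hg]
  have gB : g B = P s := by simp [hg, h.hAB.symm]
  have gX : ∀ w ∈ X, g w = q w := by
    intro w hw
    have := (hXmem w).1 hw
    simp [hg, this.1, this.2.1]
  have hs0 : 0 < s := lt_of_le_of_lt (Nat.zero_le _) (h.pos_lt A)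
  have hLcases : ∀ w ∈ L, w = A ∨ w = B ∨ w ∈ X := by
    intro w hw; rw [hXmem]; tauto
  have hgP : ∀ w ∈ X, ∀ i ≤ s, g w ≠ P i := by
    intro w hw i hi
    rw [gX w hw]
    have := hqr w hw
    have := hPr i hi
    omega
  have hginj : ∀ u ∈ L, ∀ w ∈ L, g u = g w → u = w := by
    intro u hu w hw huw
    have h0s : P 0 ≠ P s := fun e => by have := hPinj 0 (by omega) s le_rfl e; omega
    rcases hLcases u hu with rfl | rfl | hu' <;> rcases hLcases w hw with rfl | rfl | hw'
    · rfl
    · rw [gA, gB] at huw; exact absurd huw h0s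
    · rw [gA] at huw; exact absurd huw.symm (hgP w hw' 0 (by omega))
    · rw [gA, gB] at huw; exact absurd huw.symm h0s
    · rfl
    · rw [gB] at huw; exact absurd huw.symm (hgP w hw' s le_rfl)
    · rw [gA] at huw; exact absurd huw (hgP u hu' 0 (by omega))
    · rw [gB] at huw; exact absurd huw (hgP u hu' s le_rfl)
    · rw [gX u hu', gX w hw'] at huw; exact hqinj hu' hw' huw
  have hgr : ∀ u ∈ L, 1 ≤ g u ∧ g u ≤ H + 1 ∧ g u ≤ H + (s + 1) / 2 := by
    intro u hu
    rcases hLcases u hu with rfl | rfl | hu'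
    · rw [gA]; have := hPr 0 (by omega); omega
    · rw [gB]; have := hPr s le_rfl; omega
    · rw [gX u hu']; have := hqr u hu'; omega
  have hgsp : ∀ u ∈ L, ∀ i, 0 < i → i < s → g u ≠ P i := by
    intro u hu i hi0 his e
    rcases hLcases u hu with rfl | rfl | hu'
    · rw [gA] at e; have := hPinj 0 (by omega) i his.le e; omega
    · rw [gB] at e; have := hPinj s le_rfl i his.le e; omega
    · exact hgP u hu' i his.le e
  refine ⟨catLabel pos L g P, ?_, ?_, ?_⟩
  · intro e he
    rw [Finset.mem_Icc]
    rcases h.edge_cases he with ⟨u, hu, v, hv, -, rfl⟩ | ⟨u, hu, v, hv, huv, rfl⟩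
    · rw [catLabel_leaf hu hv]
      have := hgr u hu
      omega
    · rw [catLabel_spine hu hv, max_eq_right (by omega)]
      have := hPr (pos v) (h.pos_lt v).le
      omega
  · intro e he e' he' hee
    rcases h.edge_cases he with ⟨u, hu, v, hv, huv, rfl⟩ | ⟨u, hu, v, hv, huv, rfl⟩ <;>
      rcases h.edge_cases he' with ⟨u', hu', v', hv', huv', rfl⟩ | ⟨u', hu', v', hv', huv', rfl⟩
    · rw [catLabel_leaf hu hv, catLabel_leaf hu' hv'] at hee
      have e1 := hginj u hu u' hu' hee
      subst e1
      rw [h.inj v hv v' hv' (by omega)]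
    · rw [catLabel_leaf hu hv, catLabel_spine hu' hv', max_eq_right (by omega)] at hee
      exact absurd hee (hgsp u hu _ (by omega) (h.pos_lt v'))
    · rw [catLabel_spine hu hv, catLabel_leaf hu' hv', max_eq_right (by omega)] at hee
      exact absurd hee.symm (hgsp u' hu' _ (by omega) (h.pos_lt v))
    · rw [catLabel_spine hu hv, catLabel_spine hu' hv', max_eq_right (by omega),
        max_eq_right (by omega)] at hee
      have e1 := hPinj _ (h.pos_lt v).le _ (h.pos_lt v').le hee
      rw [h.inj v hv v' hv' e1, h.inj u hu u' hu' (by omega)]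
  · have hsum : ∀ v ∉ L, G.vertexSum (catLabel pos L g P) v =
        P (pos v) + P (pos v + 1) + ∑ w ∈ X with pos w = pos v, q w := by
      intro v hv
      rw [h.vertexSum_spine g P gA gB hv, ← hX]
      congr 1
      exact Finset.sum_congr rfl fun w hw => gX w (Finset.mem_filter.1 hw).1
    have hlight : ∀ v, (∀ w ∈ X, pos w ≠ pos v) → ∑ w ∈ X with pos w = pos v, q w = 0 := by
      intro v hv
      rw [Finset.filter_false_of_mem hv, Finset.sum_empty]
    have hheavy : ∀ v, ∀ w ∈ X, pos w = pos v →
        k + s / 2 + 2 ≤ ∑ w ∈ X with pos w = pos v, q w := by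
      intro v w hw hwv
      have h1 : q w ≤ ∑ w ∈ X with pos w = pos v, q w :=
        Finset.single_le_sum (f := q) (fun _ _ => Nat.zero_le _)
          (Finset.mem_filter.2 ⟨hw, hwv⟩)
      have := hqr w hw
      omega
    -- This is where the size of `k` enters: `X` is nonempty, so `n ≥ s + 3`.
    have hhl : ∀ u v, ∀ w ∈ X, pos w = pos u → (∀ w ∈ X, pos w ≠ pos v) →
        P (pos u) + P (pos u + 1) + ∑ w ∈ X with pos w = pos u, q w ≠
        P (pos v) + P (pos v + 1) + ∑ w ∈ X with pos w = pos v, q w := by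
      intro u v w hw hwu hv
      have h1 := hheavy u w hw hwu
      have h2 := hlight v hv
      have h3 := hPadd _ (h.pos_lt u)
      have h4 := hPadd _ (h.pos_lt v)
      have h5 := h.pos_lt u
      have h6 : 0 < X.card := Finset.card_pos.2 ⟨w, hw⟩
      omega
    have hls : ∀ u ∈ L, ∀ v ∉ L, G.vertexSum (catLabel pos L g P) u ≠
        G.vertexSum (catLabel pos L g P) v := by
      intro u hu v hv
      rw [h.vertexSum_leaf g P hu, hsum v hv]
      have h1 := hgr u hu
      have h2 := hPadd _ (h.pos_lt v)
      have h3 := h.pos_lt v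
      omega
    intro u v huv
    by_cases hu : u ∈ L <;> by_cases hv : v ∈ L
    · rw [h.vertexSum_leaf g P hu, h.vertexSum_leaf g P hv] at huv
      exact hginj u hu v hv huv
    · exact absurd huv (hls u hu v hv)
    · exact absurd huv.symm (hls v hv u hu)
    · rw [hsum u hu, hsum v hv] at huv
      apply h.inj u hu v hv
      by_cases cu : ∀ w ∈ X, pos w ≠ pos u <;> by_cases cv : ∀ w ∈ X, pos w ≠ pos v
      · rw [hlight u cu, hlight v cv] at huv
        have h3 := hPadd _ (h.pos_lt u)
        have h4 := hPadd _ (h.pos_lt v)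
        omega
      · push Not at cv
        obtain ⟨w, hw, hwv⟩ := cv
        exact absurd huv.symm (hhl v u w hw hwv cu)
      · push Not at cu
        obtain ⟨w, hw, hwu⟩ := cu
        exact absurd huv (hhl u v w hw hwu cv)
      · push Not at cu cv
        obtain ⟨w, hw, hwu⟩ := cu
        obtain ⟨w', hw', hwv⟩ := cv
        by_contra hne
        have := hqs w hw w' hw' (by omega)
        rw [hwu, hwv] at this
        -- `convert` reconciles two decidability instances for equality on `ℕ`.
        apply this
        convert huv
end
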